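/- The polynomial f₀ satisfies f₀(sₖ·v) = f₀(v) for all v ∈ ℂ⁴ and all k ∈ {1,2,3,4} (so f₀ is G₂₉-invariant), and any homogeneous polynomial f of degree 4 in ℂ[x,y,z,t] satisfying f(sₖ·v) = f(v) for all v and all k ∈ {1,2,3,4} is a scalar multiple of f₀. That is, up to scalar, f₀ is the unique homogeneous G₂₉-invariant of degree 4. -/

import Mathlib

open Matrix Complex MvPolynomial

/-- The generators `s₁, s₂, s₃, s₄` of Mukai's group `G₂₉ ⊂ GL(4,ℂ)`. -/
noncomputable def S : Fin 4 → Matrix (Fin 4) (Fin 4) ℂ :=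
  ![!![1,0,0,0; 0,1,0,0; 0,0,1,0; 0,0,0,-1],
    (1/2 : ℂ) • !![1, 1, I, I; 1, 1, -I, -I; -I, I, 1, -1; -I, I, -1, 1],
    !![0,1,0,0; 1,0,0,0; 0,0,1,0; 0,0,0,1],
    !![1,0,0,0; 0,0,1,0; 0,1,0,0; 0,0,0,1]]

/-- Mukai's quartic `f₀ = Σ x⁴ − 6 Σ x²y²` in `ℂ[x,y,z,t]`. -/
noncomputable def f0 : MvPolynomial (Fin 4) ℂ :=
  X 0 ^ 4 + X 1 ^ 4 + X 2 ^ 4 + X 3 ^ 4 -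
    6 * (X 0 ^ 2 * X 1 ^ 2 + X 0 ^ 2 * X 2 ^ 2 + X 0 ^ 2 * X 3 ^ 2 +
         X 1 ^ 2 * X 2 ^ 2 + X 1 ^ 2 * X 3 ^ 2 + X 2 ^ 2 * X 3 ^ 2)

/-!
The product `s₁ s₂ s₃ s₂ s₁` is the transposition of `z` and `t`. Together with `s₃` and `s₄` it
generates all permutation matrices, and conjugating `s₁` by these gives all sign changes of a single
coordinate. An invariant quartic is therefore symmetric and even in each variable, hence of the form
`a p₄ + b p₂²` in the power sums. Comparing its values at the first basis vector and at the image of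
that vector under `s₂` gives `3a + 4b = 0`, which is the line spanned by `f₀ = 4 p₄ - 3 p₂²`.

The matrix written `sₖ` here is `S (k - 1)`.
-/

section StabilizerOfPolynomial

variable {σ R : Type*}

theorem coeff_aeval_C_mul_X [CommSemiring R] (a : σ → R) (f : MvPolynomial σ R)
    (d : σ →₀ ℕ) :
    coeff d (aeval (fun i => C (a i) * X i) f) = (d.prod fun i k => a i ^ k) * coeff d f := by
  classical
  induction f using MvPolynomial.induction_on' with
  | monomial e r =>
    have scaled : aeval (fun i => C (a i) * X i) (monomial e r) =
        monomial e ((e.prod fun i k => a i ^ k) * r) := by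
      rw [aeval_monomial, algebraMap_eq, ← C_mul_monomial, monomial_eq (a := r), map_finsuppProd]
      simp only [mul_pow, Finsupp.prod_mul, ← map_pow]
      exact mul_left_comm _ _ _
    rw [scaled, coeff_monomial, coeff_monomial]
    split_ifs with h <;> simp [h]
  | add p q hp hq => rw [map_add, coeff_add, coeff_add, hp, hq, mul_add]

variable [Fintype σ] [DecidableEq σ]

/-- The matrices `A` with `f(A v) = f(v)` for all `v`. No invertibility is required, so this is
only a submonoid; it is used to transfer invariance from generators to a whole matrix group. -/
def linearStabilizer [CommSemiring R] (f : MvPolynomial σ R) : Submonoid (Matrix σ σ R) where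
  carrier := {A | ∀ v, eval (A *ᵥ v) f = eval v f}
  one_mem' v := by rw [one_mulVec]
  mul_mem' {A B} hA hB v := by rw [← mulVec_mulVec, hA, hB]

variable [CommRing R] [IsDomain R] [Infinite R] {f : MvPolynomial σ R}

theorem isSymmetric_iff_forall_permMatrix_mem_linearStabilizer :
    f.IsSymmetric ↔ ∀ τ : Equiv.Perm σ, τ.permMatrix R ∈ linearStabilizer f := by
  refine forall_congr' fun τ => ⟨fun hτ v => ?_, fun hτ => MvPolynomial.funext fun v => ?_⟩
  · rw [permMatrix_mulVec, ← eval_rename, hτ]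
  · rw [eval_rename, ← permMatrix_mulVec, hτ v]

theorem prod_pow_eq_one_of_diagonal_mem_linearStabilizer {a : σ → R}
    (hf : diagonal a ∈ linearStabilizer f) {d : σ →₀ ℕ} (hd : d ∈ f.support) :
    (d.prod fun i k => a i ^ k) = 1 := by
  have invariant : aeval (fun i => C (a i) * X i) f = f := by
    refine MvPolynomial.funext fun v => ?_
    rw [← hf v, ← aeval_eq_eval, ← aeval_eq_eval, ← AlgHom.comp_apply, comp_aeval]
    congr 2
    ext i
    simp [mulVec_diagonal]
  have scaled := coeff_aeval_C_mul_X a f d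
  rw [invariant] at scaled
  exact (right_eq_mul₀ (mem_support_iff.mp hd)).mp scaled

theorem even_of_diagonal_mem_linearStabilizer [NeZero (2 : R)] {i : σ}
    (hf : diagonal (Function.update 1 i (-1)) ∈ linearStabilizer f) {d : σ →₀ ℕ}
    (hd : d ∈ f.support) : Even (d i) := by
  have sign := prod_pow_eq_one_of_diagonal_mem_linearStabilizer hf hd
  rw [Finsupp.prod_fintype _ _ fun _ => pow_zero _,
    Fintype.prod_eq_single i fun j hj => by simp [hj], Function.update_self] at sign
  exact (neg_one_pow_eq_one_iff_even fun h =>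
    two_ne_zero (α := R) (by linear_combination -h)).mp sign

end StabilizerOfPolynomial

section SymmetricPolynomials

variable {σ R : Type*}

theorem coeff_mapDomain_of_isSymmetric [CommSemiring R] {f : MvPolynomial σ R}
    (hf : f.IsSymmetric) (τ : Equiv.Perm σ) (d : σ →₀ ℕ) :
    coeff (d.mapDomain τ) f = coeff d f := by
  conv_lhs => rw [← hf τ]
  exact coeff_rename_mapDomain τ τ.injective f d

theorem exists_coeff_single_add_single_of_isSymmetric [CommSemiring R] [DecidableEq σ]
    {f : MvPolynomial σ R} (hf : f.IsSymmetric) (n : ℕ) :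
    ∃ α β : R, ∀ k l,
      coeff (Finsupp.single k n + Finsupp.single l n) f = if k = l then α else β := by
  have orbit (τ : Equiv.Perm σ) (i j : σ) :
      coeff (Finsupp.single (τ i) n + Finsupp.single (τ j) n) f =
        coeff (Finsupp.single i n + Finsupp.single j n) f := by
    rw [← coeff_mapDomain_of_isSymmetric hf τ (Finsupp.single i n + _), Finsupp.mapDomain_add,
      Finsupp.mapDomain_single, Finsupp.mapDomain_single]
  have diagonal_eq (i k : σ) : coeff (Finsupp.single k n + Finsupp.single k n) f =
      coeff (Finsupp.single i n + Finsupp.single i n) f := by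
    simpa using orbit (Equiv.swap i k) i i
  rcases subsingleton_or_nontrivial σ with _ | _
  · rcases isEmpty_or_nonempty σ with _ | ⟨⟨i⟩⟩
    · exact ⟨0, 0, isEmptyElim⟩
    · exact ⟨_, 0, fun k l => by
        rw [if_pos (Subsingleton.elim k l), Subsingleton.elim l k, diagonal_eq i k]⟩
  · obtain ⟨i, j, hij⟩ := exists_pair_ne σ
    refine ⟨coeff (Finsupp.single i n + Finsupp.single i n) f,
      coeff (Finsupp.single i n + Finsupp.single j n) f, fun k l => ?_⟩
    split_ifs with hkl
    · rw [← hkl, diagonal_eq i k]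
    · obtain ⟨τ, rfl, rfl⟩ := MulAction.is_two_pretransitive_iff.mp
        (Equiv.Perm.isMultiplyPretransitive σ 2) hij hkl
      exact orbit τ i j

theorem eval_psum [CommSemiring R] [Fintype σ] (n : ℕ) (v : σ → R) :
    eval v (psum σ R n) = ∑ i, v i ^ n := by
  simp [psum]

theorem psum_two_mul_eq_sum_monomial [CommSemiring R] [Fintype σ] (n : ℕ) :
    psum σ R (2 * n) = ∑ i, monomial (Finsupp.single i n + Finsupp.single i n) 1 := by
  simp_rw [psum, X_pow_eq_monomial, two_mul, Finsupp.single_add]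

theorem psum_sq_eq_sum_monomial [CommSemiring R] [Fintype σ] (n : ℕ) :
    psum σ R n ^ 2 = ∑ i, ∑ j, monomial (Finsupp.single i n + Finsupp.single j n) 1 := by
  simp_rw [sq, psum, Finset.sum_mul_sum, X_pow_eq_monomial, monomial_mul, one_mul]

theorem single_add_single_inj {n : ℕ} (hn : n ≠ 0) {i j k l : σ} :
    Finsupp.single i n + Finsupp.single j n = Finsupp.single k n + Finsupp.single l n ↔
      i = k ∧ j = l ∨ i = l ∧ j = k := by
  simp [Finsupp.single_add_single_eq_single_add_single hn hn, hn]

theorem coeff_single_add_single_psum [CommSemiring R] [Fintype σ] [DecidableEq σ] {n : ℕ}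
    (hn : n ≠ 0) (k l : σ) :
    coeff (Finsupp.single k n + Finsupp.single l n) (psum σ R (2 * n)) =
      if k = l then 1 else 0 := by
  simp only [psum_two_mul_eq_sum_monomial, coeff_sum, coeff_monomial, single_add_single_inj hn]
  simp [ite_and, and_comm]

theorem coeff_single_add_single_psum_sq [CommSemiring R] [Fintype σ] [DecidableEq σ] {n : ℕ}
    (hn : n ≠ 0) (k l : σ) :
    coeff (Finsupp.single k n + Finsupp.single l n) (psum σ R n ^ 2) =
      if k = l then 1 else 2 := by
  simp only [psum_sq_eq_sum_monomial, coeff_sum, coeff_monomial, single_add_single_inj hn]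
  split_ifs with hkl
  · simp [hkl, ite_and]
  · have split (i j : σ) : (if i = k ∧ j = l ∨ i = l ∧ j = k then (1 : R) else 0) =
        (if i = k ∧ j = l then 1 else 0) + if i = l ∧ j = k then 1 else 0 := by
      split_ifs <;> grind
    simp [split, Finset.sum_add_distrib, ite_and, one_add_one_eq_two]

theorem exists_single_add_single_eq {n : ℕ} {d : σ →₀ ℕ} (hn : n ≠ 0)
    (hdvd : ∀ i, n ∣ d i) (hd : d.degree = 2 * n) :
    ∃ k l, Finsupp.single k n + Finsupp.single l n = d := by
  classical
  obtain ⟨e, rfl⟩ : ∃ e : σ →₀ ℕ, d = n • e :=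
    ⟨d.mapRange (· / n) n.zero_div, by ext i; simp [Nat.mul_div_cancel' (hdvd i)]⟩
  have he : e.toMultiset.card = 2 := by
    rw [Finsupp.card_toMultiset]
    rw [map_nsmul] at hd
    exact Nat.eq_of_mul_eq_mul_left hn.bot_lt (hd.trans (mul_comm _ _))
  obtain ⟨k, l, hkl⟩ := Multiset.card_eq_two.mp he
  have e_eq : e = Finsupp.single k 1 + Finsupp.single l 1 :=
    EquivLike.injective Multiset.toFinsupp.symm (by simpa using hkl)
  exact ⟨k, l, by simp [e_eq]⟩

theorem eq_smul_psum_add_smul_psum_sq [CommRing R] [Invertible (2 : R)] [Fintype σ]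
    {f : MvPolynomial σ R} {n : ℕ} (hn : n ≠ 0) (hsymm : f.IsSymmetric)
    (hhom : f.IsHomogeneous (2 * n)) (hdvd : ∀ d ∈ f.support, ∀ i, n ∣ d i) :
    ∃ a b : R, f = a • psum σ R (2 * n) + b • psum σ R n ^ 2 := by
  classical
  obtain ⟨α, β, hαβ⟩ := exists_coeff_single_add_single_of_isSymmetric hsymm n
  refine ⟨α - ⅟2 * β, ⅟2 * β, MvPolynomial.ext _ _ fun d => ?_⟩
  by_cases hd : ∃ k l, Finsupp.single k n + Finsupp.single l n = d
  · obtain ⟨k, l, rfl⟩ := hd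
    rw [hαβ, coeff_add, coeff_smul, coeff_smul, coeff_single_add_single_psum hn,
      coeff_single_add_single_psum_sq hn]
    split_ifs <;> simp [mul_comm _ (2 : R)]
  · have coeff_eq_zero : coeff d f = 0 := by
      by_contra hdf
      exact hd (exists_single_add_single_eq hn (hdvd d (mem_support_iff.mpr hdf))
        (not_imp_comm.mp hhom.coeff_eq_zero hdf))
    push Not at hd
    simp [coeff_eq_zero, psum_two_mul_eq_sum_monomial, psum_sq_eq_sum_monomial, coeff_sum,
      coeff_monomial, hd]

end SymmetricPolynomials

theorem permMatrix_mul_diagonal_mul_permMatrix_inv {n R : Type*} [Fintype n] [DecidableEq n]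
    [Semiring R] (τ : Equiv.Perm n) (a : n → R) :
    τ.permMatrix R * diagonal a * τ⁻¹.permMatrix R = diagonal (a ∘ τ) := by
  rw [PEquiv.toMatrix_toPEquiv_mul, PEquiv.mul_toMatrix_toPEquiv, submatrix_submatrix]
  exact submatrix_diagonal_equiv a τ

section MukaiGroup

/-- Mukai's group `G₂₉`, as the submonoid generated by the `S k`: these are involutions, so
inverses come for free. -/
def G29 : Submonoid (Matrix (Fin 4) (Fin 4) ℂ) :=
  Submonoid.closure (Set.range S)

theorem S_mem_G29 (k : Fin 4) : S k ∈ G29 :=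
  Submonoid.subset_closure ⟨k, rfl⟩

theorem G29_le_linearStabilizer_iff {f : MvPolynomial (Fin 4) ℂ} :
    G29 ≤ linearStabilizer f ↔ ∀ k v, eval (S k *ᵥ v) f = eval v f := by
  rw [G29, Submonoid.closure_le, Set.range_subset_iff]
  rfl

theorem S_two_eq_permMatrix : S 2 = (Equiv.swap 0 1).permMatrix ℂ := by
  ext i j
  fin_cases i <;> fin_cases j <;> rfl

theorem S_three_eq_permMatrix : S 3 = (Equiv.swap 1 2).permMatrix ℂ := by
  ext i j
  fin_cases i <;> fin_cases j <;> rfl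

theorem permMatrix_swap_eq_S_mul :
    (Equiv.swap (2 : Fin 4) 3).permMatrix ℂ = S 0 * S 1 * S 2 * S 1 * S 0 := by
  ext i j
  fin_cases i <;> fin_cases j <;> simp [S, mul_apply, Fin.sum_univ_four, Equiv.swap_apply_def] <;>
    grind [I_sq]

theorem permMatrix_mem_G29 (τ : Equiv.Perm (Fin 4)) : τ.permMatrix ℂ ∈ G29 := by
  have adjacent (i : Fin 3) : (Equiv.swap i.castSucc i.succ).permMatrix ℂ ∈ G29 := by
    fin_cases i
    · exact S_two_eq_permMatrix ▸ S_mem_G29 2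
    · exact S_three_eq_permMatrix ▸ S_mem_G29 3
    · exact permMatrix_swap_eq_S_mul ▸ mul_mem (mul_mem (mul_mem (mul_mem (S_mem_G29 0)
        (S_mem_G29 1)) (S_mem_G29 2)) (S_mem_G29 1)) (S_mem_G29 0)
  suffices ⊤ ≤ G29.comap permMatrixHom by simpa using this (Submonoid.mem_top τ⁻¹)
  rw [← Equiv.Perm.mclosure_swap_castSucc_succ 3, Submonoid.closure_le]
  rintro _ ⟨i, rfl⟩
  simpa using adjacent i

theorem S_zero_eq_diagonal : S 0 = diagonal (Function.update 1 3 (-1)) := by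
  ext i j
  fin_cases i <;> fin_cases j <;> simp [S]

theorem diagonal_update_neg_one_mem_G29 (i : Fin 4) :
    diagonal (Function.update 1 i (-1)) ∈ G29 := by
  have conj := permMatrix_mul_diagonal_mul_permMatrix_inv (Equiv.swap i 3)
    (Function.update (1 : Fin 4 → ℂ) 3 (-1))
  rw [Function.update_comp_equiv, Equiv.symm_swap, Equiv.swap_apply_right, Pi.one_comp,
    ← S_zero_eq_diagonal] at conj
  rw [← conj]
  exact mul_mem (mul_mem (permMatrix_mem_G29 _) (S_mem_G29 0)) (permMatrix_mem_G29 _)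

theorem f0_eq_psum : f0 = (4 : ℂ) • psum (Fin 4) ℂ 4 - (3 : ℂ) • psum (Fin 4) ℂ 2 ^ 2 := by
  simp only [f0, psum, Fin.sum_univ_four, smul_eq_C_mul, map_ofNat]
  ring

theorem f0_isSymmetric : f0.IsSymmetric := by
  rw [f0_eq_psum, sq]
  exact ((psum_isSymmetric _ _ 4).smul 4).sub
    (((psum_isSymmetric _ _ 2).mul (psum_isSymmetric _ _ 2)).smul 3)

theorem eval_f0 (v : Fin 4 → ℂ) :
    eval v f0 = 4 * ∑ i, v i ^ 4 - 3 * (∑ i, v i ^ 2) ^ 2 := by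
  simp [f0_eq_psum, eval_psum]

theorem S_one_mulVec (v : Fin 4 → ℂ) :
    S 1 *ᵥ v = ![(v 0 + v 1 + I * (v 2 + v 3)) / 2, (v 0 + v 1 - I * (v 2 + v 3)) / 2,
      (v 2 - v 3 - I * (v 0 - v 1)) / 2, (v 3 - v 2 - I * (v 0 - v 1)) / 2] := by
  ext i
  fin_cases i <;> simp [S, mulVec, dotProduct, Fin.sum_univ_four] <;> ring

theorem S_mem_linearStabilizer_f0 (k : Fin 4) : S k ∈ linearStabilizer f0 := by
  have perm := isSymmetric_iff_forall_permMatrix_mem_linearStabilizer.mp f0_isSymmetric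
  fin_cases k
  · intro v
    simp [S_zero_eq_diagonal, mulVec_diagonal, eval_f0, Fin.sum_univ_four,
      Even.neg_pow (show Even 4 by decide)]
  · intro v
    simp only [Fin.mk_one, S_one_mulVec, eval_f0, Fin.sum_univ_four, cons_val]
    grind [I_sq]
  · exact S_two_eq_permMatrix ▸ perm _
  · exact S_three_eq_permMatrix ▸ perm _

theorem three_mul_add_four_mul_eq_zero_of_S_one_mem_linearStabilizer {a b : ℂ}
    (h : S 1 ∈ linearStabilizer (a • psum (Fin 4) ℂ 4 + b • psum (Fin 4) ℂ 2 ^ 2)) :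
    3 * a + 4 * b = 0 := by
  have source {n : ℕ} (hn : n ≠ 0) : ∑ i, (Pi.single 0 1 : Fin 4 → ℂ) i ^ n = 1 := by
    simp [Pi.single_apply, ite_pow, hn]
  have image : S 1 *ᵥ Pi.single 0 1 = ![1 / 2, 1 / 2, -I / 2, -I / 2] := by
    rw [S_one_mulVec]
    simp
  have p₄ : ∑ i, (S 1 *ᵥ Pi.single 0 1) i ^ 4 = 1 / 4 := by
    simp only [image, Fin.sum_univ_four, cons_val]
    grind [I_sq]
  have p₂ : ∑ i, (S 1 *ᵥ Pi.single 0 1) i ^ 2 = 0 := by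
    simp only [image, Fin.sum_univ_four, cons_val]
    grind [I_sq]
  have values := h (Pi.single 0 1)
  simp only [map_add, smul_eval, map_pow, eval_psum, p₂, p₄,
    source two_ne_zero, source four_ne_zero] at values
  linear_combination -4 * values

end MukaiGroup

/-- `f₀` is invariant under the generators `s₁, s₂, s₃, s₄` of `G₂₉`, and
every homogeneous polynomial of degree `4` invariant under them is a scalar
multiple of `f₀`: up to scalar, `f₀` is the unique degree-4 invariant of `G₂₉`. -/
theorem stmt_14 :
    (∀ k : Fin 4, ∀ v : Fin 4 → ℂ, eval ((S k).mulVec v) f0 = eval v f0) ∧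
    (∀ f : MvPolynomial (Fin 4) ℂ, f.IsHomogeneous 4 →
      (∀ k : Fin 4, ∀ v : Fin 4 → ℂ, eval ((S k).mulVec v) f = eval v f) →
      ∃ c : ℂ, f = c • f0) := by
  refine ⟨S_mem_linearStabilizer_f0, fun f hhom hS => ?_⟩
  have hG := G29_le_linearStabilizer_iff.mpr hS
  have hsymm : f.IsSymmetric :=
    isSymmetric_iff_forall_permMatrix_mem_linearStabilizer.mpr fun τ => hG (permMatrix_mem_G29 τ)
  have heven : ∀ d ∈ f.support, ∀ i, 2 ∣ d i := fun d hd i =>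
    (even_of_diagonal_mem_linearStabilizer (hG (diagonal_update_neg_one_mem_G29 i)) hd).two_dvd
  obtain ⟨a, b, rfl⟩ := eq_smul_psum_add_smul_psum_sq two_ne_zero hsymm hhom heven
  have hab : 3 * a + 4 * b = 0 :=
    three_mul_add_four_mul_eq_zero_of_S_one_mem_linearStabilizer (hS 1)
  have hb : b = -3 * (a / 4) := by linear_combination hab / 4
  refine ⟨a / 4, ?_⟩
  rw [f0_eq_psum, hb]
  module
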